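/- arXiv:2204.09380 — 7 statements merged into one kernel-verified Lean document; each statement's English description precedes it below -/
import Mathlib

section
/- Suppose G ≠ 0 and F + ⟪G, u_des⟫ + Λ ≥ 0. Define u* = u_des − ((F + ⟪G, u_des⟫ + Λ)/‖G‖²) • G. Then F + ⟪G, u*⟫ + Λ = 0, and u* is the unique minimizer of J(u) = (1/2)‖u − u_des‖² over the halfspace H = {u ∈ ℝ^m : F + ⟪G, u⟫ + Λ ≤ 0}. (This is the explicit formula (10a) of Case 2 of the CBF-QP: projection of the desired input onto the control Barrier function constraint.) -/
open RealInnerProductSpace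

/-! The displacement `u_des - uStar` is a nonnegative multiple of the outward normal `G` of the
halfspace, and the constraint is active at `uStar`. Hence the triangle `u_des, uStar, u` has a
non-acute angle at `uStar` for every feasible `u`, and the law of cosines gives
`‖u - u_des‖² ≥ ‖uStar - u_des‖² + ‖u - uStar‖²`: the last term yields uniqueness. -/

section Seminormed

variable {E : Type*} [SeminormedAddCommGroup E] [InnerProductSpace ℝ E]

theorem inner_sub_div_norm_sq_smul {a : E} (ha : ‖a‖ ≠ 0) (x : E) (c : ℝ) :
    ⟪a, x - (c / ‖a‖ ^ 2) • a⟫ = ⟪a, x⟫ - c := by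
  rw [inner_sub_right, real_inner_smul_right, real_inner_self_eq_norm_sq,
    div_mul_cancel₀ c (pow_ne_zero 2 ha)]

theorem inner_sub_sub_nonpos_of_sub_eq_smul {a x y p : E} {t : ℝ} (ht : 0 ≤ t)
    (hxp : x - p = t • a) (hy : ⟪a, y⟫ ≤ ⟪a, p⟫) : ⟪x - p, y - p⟫ ≤ 0 := by
  rw [hxp, real_inner_smul_left, inner_sub_right]
  exact mul_nonpos_of_nonneg_of_nonpos ht (sub_nonpos.mpr hy)

theorem norm_sub_sq_add_norm_sub_sq_le_of_inner_nonpos {x y p : E}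
    (h : ⟪x - p, y - p⟫ ≤ 0) : ‖p - x‖ ^ 2 + ‖y - p‖ ^ 2 ≤ ‖y - x‖ ^ 2 := by
  have law_of_cosines := norm_sub_sq_real (x - p) (y - p)
  rw [sub_sub_sub_cancel_right, norm_sub_rev x y, norm_sub_rev x p] at law_of_cosines
  linarith

theorem norm_sub_le_norm_sub_of_inner_nonpos {x y p : E} (h : ⟪x - p, y - p⟫ ≤ 0) :
    ‖p - x‖ ≤ ‖y - x‖ := by
  have hsq : ‖p - x‖ ^ 2 ≤ ‖y - x‖ ^ 2 :=
    (le_add_of_nonneg_right (sq_nonneg ‖y - p‖)).trans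
      (norm_sub_sq_add_norm_sub_sq_le_of_inner_nonpos h)
  exact le_of_sq_le_sq hsq (norm_nonneg _)

end Seminormed

section Normed

variable {E : Type*} [NormedAddCommGroup E] [InnerProductSpace ℝ E]

theorem eq_of_norm_sub_le_of_inner_nonpos {x y p : E} (h : ⟪x - p, y - p⟫ ≤ 0)
    (hle : ‖y - x‖ ≤ ‖p - x‖) : y = p := by
  have hsq : ‖y - x‖ ^ 2 ≤ ‖p - x‖ ^ 2 := by gcongr
  have hdist : ‖y - p‖ ^ 2 ≤ 0 := by
    linarith [norm_sub_sq_add_norm_sub_sq_le_of_inner_nonpos h]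
  rwa [sq_nonpos_iff, norm_sub_eq_zero_iff] at hdist

theorem cbf_qp_case2_halfspace_general (F Λ : ℝ) (G u_des : E) (hG : G ≠ 0)
    (hpos : 0 ≤ F + ⟪G, u_des⟫ + Λ) (uStar : E)
    (huStar : uStar = u_des - ((F + ⟪G, u_des⟫ + Λ) / ‖G‖ ^ 2) • G)
    (H : Set E) (hH : H = {u | F + ⟪G, u⟫ + Λ ≤ 0})
    (J : E → ℝ) (hJ : ∀ u, J u = (1 / 2) * ‖u - u_des‖ ^ 2) :
    F + ⟪G, uStar⟫ + Λ = 0 ∧ uStar ∈ H ∧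
      (∀ u ∈ H, J uStar ≤ J u) ∧ (∀ u ∈ H, J u = J uStar → u = uStar) := by
  have hactive : F + ⟪G, uStar⟫ + Λ = 0 := by
    rw [huStar, inner_sub_div_norm_sq_smul (norm_ne_zero_iff.mpr hG)]
    ring
  have hobtuse : ∀ u ∈ H, ⟪u_des - uStar, u - uStar⟫ ≤ 0 := by
    intro u hu
    rw [hH, Set.mem_ofPred_eq] at hu
    have hnormal : u_des - uStar = ((F + ⟪G, u_des⟫ + Λ) / ‖G‖ ^ 2) • G := by
      rw [huStar, sub_sub_cancel]
    exact inner_sub_sub_nonpos_of_sub_eq_smul (by positivity) hnormal (by linarith)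
  have hJ_le : ∀ u v, J u ≤ J v ↔ ‖u - u_des‖ ≤ ‖v - u_des‖ := by
    intro u v
    rw [hJ, hJ, mul_le_mul_iff_right₀ one_half_pos,
      sq_le_sq₀ (norm_nonneg _) (norm_nonneg _)]
  refine ⟨hactive, hH ▸ hactive.le, fun u hu => ?_, fun u hu heq => ?_⟩
  · exact (hJ_le uStar u).mpr (norm_sub_le_norm_sub_of_inner_nonpos (hobtuse u hu))
  · exact eq_of_norm_sub_le_of_inner_nonpos (hobtuse u hu) ((hJ_le u uStar).mp heq.le)

end Normed

/-- Case 2 formula (10a) of the CBF-QP: if `G ≠ 0` and `F + ⟪G, u_des⟫ + Λ ≥ 0`, then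
`u* = u_des − ((F + ⟪G, u_des⟫ + Λ)/‖G‖²) • G` makes the control Barrier function constraint
active and is the unique minimizer of `J(u) = (1/2)‖u − u_des‖²` over the halfspace
`H = {u : F + ⟪G, u⟫ + Λ ≤ 0}`. -/
theorem cbf_qp_case2_halfspace (m : ℕ) (F Λ : ℝ) (G u_des : EuclideanSpace ℝ (Fin m))
    (hG : G ≠ 0) (hpos : F + ⟪G, u_des⟫ + Λ ≥ 0)
    (uStar : EuclideanSpace ℝ (Fin m))
    (huStar : uStar = u_des - ((F + ⟪G, u_des⟫ + Λ) / ‖G‖ ^ 2) • G)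
    (H : Set (EuclideanSpace ℝ (Fin m)))
    (hH : H = {u | F + ⟪G, u⟫ + Λ ≤ 0})
    (J : EuclideanSpace ℝ (Fin m) → ℝ)
    (hJ : ∀ u, J u = (1 / 2) * ‖u - u_des‖ ^ 2) :
    F + ⟪G, uStar⟫ + Λ = 0 ∧ uStar ∈ H ∧
      (∀ u ∈ H, J uStar ≤ J u) ∧ (∀ u ∈ H, J u = J uStar → u = uStar) :=
  cbf_qp_case2_halfspace_general F Λ G u_des hG hpos uStar huStar H hH J hJ
end

section
/- Suppose G ∈ ℝ^m is nonzero, A_I is a real k×m matrix, and the k+1 vectors consisting of the rows of A_I together with G are linearly independent. Then the k×k matrix A_I·(I_m − (1/‖G‖²)·G Gᵀ)·A_Iᵀ is positive definite, and in particular invertible. (Invertibility of the matrix defining the multiplier μ in Case 3 of the CBF-QP, under the paper's standing assumption that the active constraints are linearly independent.) -/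
open RealInnerProductSpace Matrix

/-! The matrix `P = I − (1/‖G‖²) G Gᵀ` is an orthogonal projection, so `A P Aᵀ = (A P)(A P)ᵀ` is a
Gram matrix, and it is positive definite as soon as the rows of `A P` are linearly independent.
Since `P` kills only the multiples of `G`, projecting preserves the independence of the rows of `A`
when `G` is not in their span. -/

lemma mul_mul_conjTranspose_of_isStarProjection {m n R : Type*} [Fintype n]
    [NonUnitalSemiring R] [StarRing R] (A : Matrix m n R) {P : Matrix n n R}
    (hP : IsStarProjection P) : A * P * Aᴴ = (A * P) * (A * P)ᴴ :=
  calc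
    A * P * Aᴴ = A * (P * P) * Aᴴ := by rw [hP.isIdempotentElem.eq]
    _ = (A * P) * (P * Aᴴ) := by simp only [Matrix.mul_assoc]
    _ = (A * P) * (A * P)ᴴ := by
      rw [conjTranspose_mul, ← star_eq_conjTranspose P, hP.isSelfAdjoint.star_eq]

lemma posDef_mul_mul_conjTranspose_of_isStarProjection {m n R : Type*} [Finite m] [Fintype n]
    [Ring R] [PartialOrder R] [StarRing R] [StarOrderedRing R] [NoZeroDivisors R]
    {A : Matrix m n R} {P : Matrix n n R} (hP : IsStarProjection P)
    (hA : LinearIndependent R A.row)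
    (hdisj : Disjoint (Submodule.span R (Set.range A.row)) (LinearMap.ker P.vecMulLinear)) :
    (A * P * Aᴴ).PosDef := by
  have := Fintype.ofFinite m
  have hrows : LinearIndependent R (A * P).row := hA.map hdisj
  rw [mul_mul_conjTranspose_of_isStarProjection A hP]
  exact PosDef.mul_conjTranspose_self _ (vecMul_injective_iff.mpr hrows)

lemma transpose_eq_and_dotProduct_mulVec_pos_and_isUnit_of_posDef {n K : Type*} [Fintype n]
    [DecidableEq n] [Field K] [PartialOrder K] [StarRing K] [TrivialStar K] {Q : Matrix n n K}
    (hQ : Q.PosDef) : Qᵀ = Q ∧ (∀ y : n → K, y ≠ 0 → 0 < y ⬝ᵥ Q *ᵥ y) ∧ IsUnit Q := by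
  refine ⟨?_, fun y hy => ?_, hQ.isUnit⟩
  · rw [← conjTranspose_eq_transpose_of_trivial, hQ.isHermitian.eq]
  · simpa only [star_trivial] using hQ.dotProduct_mulVec_pos hy

section Rejection

variable {n K : Type*} [Fintype n] [DecidableEq n] [Field K] [StarRing K]

/-- The orthogonal projection onto the complement of the line through `g` (the vector rejection from
`g`), as a matrix acting on row vectors by `v ↦ v ᵥ* rejectionMatrix g`; hence the `star` on the
first factor. If `star g ⬝ᵥ g = 0`, in particular for `g = 0`, the inverse is `0` and the matrix is
`1`. -/
def rejectionMatrix (g : n → K) : Matrix n n K :=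
  1 - (star g ⬝ᵥ g)⁻¹ • vecMulVec (star g) g

lemma vecMul_rejectionMatrix (g v : n → K) :
    v ᵥ* rejectionMatrix g = v - ((star g ⬝ᵥ g)⁻¹ * (v ⬝ᵥ star g)) • g := by
  rw [rejectionMatrix, vecMul_sub, vecMul_one, vecMul_smul, vecMul_vecMulVec, smul_smul]

lemma isStarProjection_rejectionMatrix (g : n → K) : IsStarProjection (rejectionMatrix g) := by
  refine IsStarProjection.one_sub ⟨?idempotent, ?selfAdjoint⟩
  case idempotent =>
    have hcancel (c : K) : c⁻¹ * c⁻¹ * c = c⁻¹ := by simpa only [inv_inv] using mul_self_mul_inv c⁻¹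
    rw [IsIdempotentElem, smul_mul_smul_comm, vecMulVec_mul_vecMulVec, vecMulVec_smul, smul_smul,
      dotProduct_comm g, hcancel]
  case selfAdjoint =>
    have hreal : star (star g ⬝ᵥ g) = star g ⬝ᵥ g := (star_dotProduct g g).symm
    rw [IsSelfAdjoint, star_smul, star_inv₀, hreal, star_eq_conjTranspose, conjTranspose_vecMulVec,
      star_star]

lemma ker_vecMulLinear_rejectionMatrix_le (g : n → K) :
    LinearMap.ker (rejectionMatrix g).vecMulLinear ≤ Submodule.span K {g} := by
  intro v hv
  rw [LinearMap.mem_ker, vecMulLinear_apply, vecMul_rejectionMatrix, sub_eq_zero] at hv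
  exact Submodule.mem_span_singleton.mpr ⟨_, hv.symm⟩

theorem cbf_qp_Gminus_posdef_general [PartialOrder K] [StarOrderedRing K] {m : Type*}
    {A : Matrix m n K} {g : n → K} (hA : LinearIndependent K A.row)
    (hg : g ∉ Submodule.span K (Set.range A.row)) : (A * rejectionMatrix g * Aᴴ).PosDef :=
  have : Finite m := hA.finite
  posDef_mul_mul_conjTranspose_of_isStarProjection (isStarProjection_rejectionMatrix g) hA
    ((Submodule.disjoint_span_singleton_of_notMem hg).mono_right
      (ker_vecMulLinear_rejectionMatrix_le g))

end Rejection

lemma rejectionMatrix_ofLp {n : Type*} [Fintype n] [DecidableEq n] (G : EuclideanSpace ℝ n) :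
    rejectionMatrix (G : n → ℝ) = 1 - (1 / ‖G‖ ^ 2) • vecMulVec G G := by
  rw [rejectionMatrix, star_trivial, one_div, ← real_inner_self_eq_norm_sq,
    EuclideanSpace.inner_eq_star_dotProduct, star_trivial]

/-- If `G ≠ 0` and the rows of `A_I` together with `G` are linearly independent, then
`A_I (I − (1/‖G‖²) G Gᵀ) A_Iᵀ` is symmetric positive definite, and in particular invertible. -/
theorem cbf_qp_Gminus_posdef (m k : ℕ) (G : EuclideanSpace ℝ (Fin m)) (hG : G ≠ 0)
    (AI : Matrix (Fin k) (Fin m) ℝ)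
    (hind : LinearIndependent ℝ (Matrix.vecCons (G : Fin m → ℝ) (fun i => AI i)))
    (Q : Matrix (Fin k) (Fin k) ℝ)
    (hQ : Q = AI * ((1 : Matrix (Fin m) (Fin m) ℝ) - (1 / ‖G‖ ^ 2) • vecMulVec G G) * AIᵀ) :
    Qᵀ = Q ∧ (∀ y : Fin k → ℝ, y ≠ 0 → 0 < y ⬝ᵥ Q.mulVec y) ∧ IsUnit Q := by
  obtain ⟨hrows, hG_notMem⟩ := linearIndependent_finCons.mp hind
  rw [← rejectionMatrix_ofLp] at hQ
  exact transpose_eq_and_dotProduct_mulVec_pos_and_isUnit_of_posDef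
    (hQ ▸ cbf_qp_Gminus_posdef_general hrows hG_notMem)
end

section
/- Suppose G ∈ ℝ^m is nonzero, A_I is a real k×m matrix, b_I ∈ ℝ^k, and the matrix M = A_I·G̃⁻·A_Iᵀ is invertible, where G̃⁻ = I_m − (1/‖G‖²)·G Gᵀ. Define μ = M⁻¹·(A_I·G̃⁻·u_des − ((F + Λ)/‖G‖²)·A_I·G + b_I), λ = (F + ⟪G, u_des⟫ + Λ − ⟪G, A_Iᵀ·μ⟫)/‖G‖², and u* = u_des − λ • G − A_Iᵀ·μ. Then these quantities satisfy the Case-3 KKT equality system: u* − u_des + λ • G + A_Iᵀ·μ = 0, F + ⟪G, u*⟫ + Λ = 0, and A_I·u* + b_I = 0. (Explicit closed-form solution (12) of Case 3 of the CBF-QP, where both the control Barrier function constraint and the control-limit constraints indexed by I are active.) -/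
open RealInnerProductSpace Matrix

/-!
Eliminating `λ` through the CBF constraint, `u* = u_des - λ • G - Aᵀμ` is the projection of
`u_des - Aᵀμ` onto the hyperplane `F + ⟪G, u⟫ + Λ = 0`. That projection is affine with linear part
the orthogonal projection `G̃⁻` onto `Gᗮ`, so activity of the control limits at `u*` is a linear
equation for `μ` with matrix `A G̃⁻ Aᵀ`.
-/

section InnerProductSpace

variable {E W : Type*} [NormedAddCommGroup E] [InnerProductSpace ℝ E]
  [AddCommGroup W] [Module ℝ W]

/-- The nearest-point projection of `x` onto the hyperplane `{y | c + ⟪v, y⟫ = 0}` with normal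
vector `v`; for `v = 0` the division by zero makes it the identity. -/
noncomputable def hyperplaneProjection (v : E) (c : ℝ) (x : E) : E :=
  x - ((c + ⟪v, x⟫) / ‖v‖ ^ 2) • v

theorem add_inner_hyperplaneProjection {v : E} (hv : v ≠ 0) (c : ℝ) (x : E) :
    c + ⟪v, hyperplaneProjection v c x⟫ = 0 := by
  have hnorm : ‖v‖ ^ 2 ≠ 0 := pow_ne_zero 2 (norm_ne_zero_iff.mpr hv)
  rw [hyperplaneProjection, inner_sub_right, real_inner_smul_right, real_inner_self_eq_norm_sq,
    div_mul_cancel₀ _ hnorm]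
  ring

theorem hyperplaneProjection_eq_starProjection_sub (v : E) (c : ℝ) (x : E) :
    hyperplaneProjection v c x = (ℝ ∙ v)ᗮ.starProjection x - (c / ‖v‖ ^ 2) • v := by
  rw [hyperplaneProjection, Submodule.starProjection_orthogonal_val,
    Submodule.starProjection_singleton, RCLike.ofReal_real_eq_id, id_eq]
  module

theorem map_hyperplaneProjection_sub_add_eq_zero_iff (A : E →ₗ[ℝ] W) (b : W) (v : E) (c : ℝ)
    (x w : E) :
    A (hyperplaneProjection v c (x - w)) + b = 0 ↔
      A ((ℝ ∙ v)ᗮ.starProjection w) =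
        A ((ℝ ∙ v)ᗮ.starProjection x) - (c / ‖v‖ ^ 2) • A v + b := by
  have hsplit : A (hyperplaneProjection v c (x - w)) + b =
      A ((ℝ ∙ v)ᗮ.starProjection x) - (c / ‖v‖ ^ 2) • A v + b -
        A ((ℝ ∙ v)ᗮ.starProjection w) := by
    simp only [hyperplaneProjection_eq_starProjection_sub, map_sub, map_smul]
    abel
  rw [hsplit, sub_eq_zero, eq_comm]

/-- The vector `w` plays the role of `Aᵀμ`, so that `hw` reads
`A G̃⁻ Aᵀ μ = A G̃⁻ u_des - ((F + Λ) / ‖G‖²) A G + b`. -/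
theorem cbf_qp_case3_formula_general (F Λ : ℝ) (G u_des : E) (hG : G ≠ 0)
    (A : E →ₗ[ℝ] W) (b : W) (w : E)
    (hw : A ((ℝ ∙ G)ᗮ.starProjection w) =
      A ((ℝ ∙ G)ᗮ.starProjection u_des) - ((F + Λ) / ‖G‖ ^ 2) • A G + b)
    (lam : ℝ) (hlam : lam = (F + ⟪G, u_des⟫ + Λ - ⟪G, w⟫) / ‖G‖ ^ 2)
    (uStar : E) (huStar : uStar = u_des - lam • G - w) :
    uStar - u_des + lam • G + w = 0 ∧ F + ⟪G, uStar⟫ + Λ = 0 ∧ A uStar + b = 0 := by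
  have hproj : uStar = hyperplaneProjection G (F + Λ) (u_des - w) := by
    have hlam' : lam = (F + Λ + ⟪G, u_des - w⟫) / ‖G‖ ^ 2 := by
      rw [hlam, inner_sub_right]
      ring
    rw [huStar, hyperplaneProjection, ← hlam', sub_right_comm]
  refine ⟨by rw [huStar]; abel, ?_, ?_⟩
  · rw [add_right_comm, hproj, add_inner_hyperplaneProjection hG]
  · rw [hproj, map_hyperplaneProjection_sub_add_eq_zero_iff]
    exact hw

end InnerProductSpace

theorem one_sub_smul_vecMulVec_mulVec_eq_starProjection {ι : Type*} [Fintype ι] [DecidableEq ι]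
    (v : EuclideanSpace ℝ ι) (x : ι → ℝ) :
    ((1 : Matrix ι ι ℝ) - (1 / ‖v‖ ^ 2) • vecMulVec v v) *ᵥ x =
      (ℝ ∙ v)ᗮ.starProjection (WithLp.toLp 2 x) := by
  have hinner : (v : ι → ℝ) ⬝ᵥ x = ⟪v, WithLp.toLp 2 x⟫ := by
    rw [EuclideanSpace.inner_eq_star_dotProduct, star_trivial, dotProduct_comm]
  rw [sub_mulVec, one_mulVec, smul_mulVec, vecMulVec_mulVec, hinner, op_smul_eq_smul, smul_smul,
    one_div_mul_eq_div, Submodule.starProjection_orthogonal_val,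
    Submodule.starProjection_singleton, WithLp.ofLp_sub, WithLp.ofLp_smul,
    RCLike.ofReal_real_eq_id, id_eq]

/-- Explicit closed-form solution (12) of Case 3 of the CBF-QP: with
`G̃⁻ = I − (1/‖G‖²) G Gᵀ`, `M = A_I G̃⁻ A_Iᵀ` invertible,
`μ = M⁻¹(A_I G̃⁻ u_des − ((F+Λ)/‖G‖²) A_I G + b_I)`,
`λ = (F + ⟪G, u_des⟫ + Λ − ⟪G, A_Iᵀ μ⟫)/‖G‖²` and `u* = u_des − λ•G − A_Iᵀ μ`,
the Case-3 KKT equality system holds: stationarity, active CBF constraint and active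
control-limit constraints. -/
theorem cbf_qp_case3_formula (m k : ℕ) (F Λ : ℝ) (G u_des : EuclideanSpace ℝ (Fin m))
    (hG : G ≠ 0)
    (AI : Matrix (Fin k) (Fin m) ℝ) (bI : Fin k → ℝ)
    (Gminus : Matrix (Fin m) (Fin m) ℝ)
    (hGminus : Gminus = (1 : Matrix (Fin m) (Fin m) ℝ) - (1 / ‖G‖ ^ 2) • vecMulVec G G)
    (M : Matrix (Fin k) (Fin k) ℝ) (hM : M = AI * Gminus * AIᵀ) (hMinv : IsUnit M)
    (μ : Fin k → ℝ)
    (hμ : μ = M⁻¹.mulVec ((AI * Gminus).mulVec u_des - ((F + Λ) / ‖G‖ ^ 2) • AI.mulVec G + bI))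
    (lam : ℝ)
    (hlam : lam = (F + ⟪G, u_des⟫ + Λ -
      ⟪G, (WithLp.equiv 2 (Fin m → ℝ)).symm (AIᵀ.mulVec μ)⟫) / ‖G‖ ^ 2)
    (uStar : EuclideanSpace ℝ (Fin m))
    (huStar : uStar = u_des - lam • G - (WithLp.equiv 2 (Fin m → ℝ)).symm (AIᵀ.mulVec μ)) :
    uStar - u_des + lam • G + (WithLp.equiv 2 (Fin m → ℝ)).symm (AIᵀ.mulVec μ) = 0 ∧
      F + ⟪G, uStar⟫ + Λ = 0 ∧
      AI.mulVec uStar + bI = 0 := by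
  have hMμ : M *ᵥ μ =
      (AI * Gminus) *ᵥ u_des - ((F + Λ) / ‖G‖ ^ 2) • AI *ᵥ G + bI := by
    rw [hμ, mulVec_mulVec, mul_nonsing_inv _ ((isUnit_iff_isUnit_det M).mp hMinv), one_mulVec]
  simp only [hM, hGminus, ← mulVec_mulVec,
    one_sub_smul_vecMulVec_mulVec_eq_starProjection] at hMμ
  exact cbf_qp_case3_formula_general F Λ G u_des hG
    (AI.mulVecLin ∘ₗ (WithLp.linearEquiv 2 ℝ (Fin m → ℝ)).toLinearMap) bI
    ((WithLp.equiv 2 (Fin m → ℝ)).symm (AIᵀ *ᵥ μ)) hMμ lam hlam uStar huStar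
end

section
/- Let C ⊆ ℝ^n be open, let F, Λ : C → ℝ and u_des, G : C → ℝ^m be locally Lipschitz functions, and suppose G(x) ≠ 0 for every x ∈ C. Then the map x ↦ u_des(x) − ((F(x) + ⟪G(x), u_des(x)⟫ + Λ(x))/‖G(x)‖²) • G(x) is locally Lipschitz on C. (Lipschitz continuity of the explicit Case-2 safe control law (10a) on its critical region, the core of Theorem 2: the optimal control law u*(x) of the feasible CBF-QP is locally Lipschitz continuous.) -/
open RealInnerProductSpace

/-!
The control law is built from `F`, `Λ`, `u_des` and `G` by sums, inner products, scalar
multiplication and inversion of the nonvanishing function `‖G‖ ^ 2`. Bounded bilinear maps are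
strictly differentiable everywhere and inversion is so away from `0`; strict differentiability gives
a local Lipschitz bound, and local Lipschitz bounds survive composition.
-/

section Composition

variable {α β γ : Type*} [PseudoEMetricSpace α] [PseudoEMetricSpace β] [PseudoEMetricSpace γ]
  {s : Set α}

lemma locallyLipschitzOn_comp {t : Set β} {g : β → γ} {f : α → β}
    (hg : LocallyLipschitzOn t g) (hf : LocallyLipschitzOn s f) (hst : Set.MapsTo f s t) :
    LocallyLipschitzOn s (g ∘ f) := by
  intro x hx
  obtain ⟨Kf, u, hu, hfu⟩ := hf hx
  obtain ⟨Kg, v, hv, hgv⟩ := hg (hst hx)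
  have hfv : f ⁻¹' v ∈ nhdsWithin x s :=
    (hf.continuousOn x hx).tendsto_nhdsWithin hst hv
  exact ⟨Kg * Kf, u ∩ f ⁻¹' v, Filter.inter_mem hu hfv,
    hgv.comp (hfu.mono Set.inter_subset_left) fun _ hy => hy.2⟩

lemma locallyLipschitzOn_prodMk {f : α → β} {g : α → γ}
    (hf : LocallyLipschitzOn s f) (hg : LocallyLipschitzOn s g) :
    LocallyLipschitzOn s fun x => (f x, g x) := by
  intro x hx
  obtain ⟨Kf, u, hu, hfu⟩ := hf hx
  obtain ⟨Kg, v, hv, hgv⟩ := hg hx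
  exact ⟨max Kf Kg, u ∩ v, Filter.inter_mem hu hv,
    (hfu.mono Set.inter_subset_left).prodMk (hgv.mono Set.inter_subset_right)⟩

end Composition

section Differentiable

variable {α 𝕜 E F H : Type*} [PseudoEMetricSpace α] [NontriviallyNormedField 𝕜]
  [NormedAddCommGroup E] [NormedSpace 𝕜 E] [NormedAddCommGroup F] [NormedSpace 𝕜 F]
  [NormedAddCommGroup H] [NormedSpace 𝕜 H] {s : Set α}

lemma locallyLipschitzOn_of_hasStrictFDerivAt {t : Set E} {f : E → F} {f' : E → E →L[𝕜] F}
    (hf : ∀ x ∈ t, HasStrictFDerivAt f (f' x) x) : LocallyLipschitzOn t f := by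
  intro x hx
  obtain ⟨K, u, hu, hfu⟩ := (hf x hx).exists_lipschitzOnWith
  exact ⟨K, u, mem_nhdsWithin_of_mem_nhds hu, hfu⟩

lemma locallyLipschitzOn_isBoundedBilinearMap_comp {B : E × F → H} (hB : IsBoundedBilinearMap 𝕜 B)
    {f : α → E} {g : α → F} (hf : LocallyLipschitzOn s f) (hg : LocallyLipschitzOn s g) :
    LocallyLipschitzOn s fun x => B (f x, g x) :=
  locallyLipschitzOn_comp
    (locallyLipschitzOn_of_hasStrictFDerivAt fun p _ => hB.hasStrictFDerivAt p)
    (locallyLipschitzOn_prodMk hf hg) (Set.mapsTo_univ _ _)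

lemma locallyLipschitzOn_smul {c : α → 𝕜} {f : α → E}
    (hc : LocallyLipschitzOn s c) (hf : LocallyLipschitzOn s f) :
    LocallyLipschitzOn s fun x => c x • f x :=
  locallyLipschitzOn_isBoundedBilinearMap_comp (𝕜 := 𝕜) isBoundedBilinearMap_smul hc hf

lemma locallyLipschitzOn_inv₀ {c : α → 𝕜} (hc : LocallyLipschitzOn s c)
    (hc₀ : ∀ x ∈ s, c x ≠ 0) : LocallyLipschitzOn s fun x => (c x)⁻¹ := by
  have hinv : LocallyLipschitzOn {0}ᶜ (Inv.inv : 𝕜 → 𝕜) :=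
    locallyLipschitzOn_of_hasStrictFDerivAt fun _ hy => (hasStrictDerivAt_inv hy).hasStrictFDerivAt
  exact locallyLipschitzOn_comp hinv hc hc₀

lemma locallyLipschitzOn_div₀ {c d : α → 𝕜} (hc : LocallyLipschitzOn s c)
    (hd : LocallyLipschitzOn s d) (hd₀ : ∀ x ∈ s, d x ≠ 0) :
    LocallyLipschitzOn s fun x => c x / d x := by
  simpa only [div_eq_mul_inv, smul_eq_mul] using
    locallyLipschitzOn_smul hc (locallyLipschitzOn_inv₀ hd hd₀)

end Differentiable

lemma locallyLipschitzOn_inner {α 𝕜 E : Type*} [PseudoEMetricSpace α] [RCLike 𝕜]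
    [NormedAddCommGroup E] [InnerProductSpace 𝕜 E] {s : Set α} {f g : α → E}
    (hf : LocallyLipschitzOn s f) (hg : LocallyLipschitzOn s g) :
    LocallyLipschitzOn s fun x => inner 𝕜 (f x) (g x) :=
  letI : InnerProductSpace ℝ E := InnerProductSpace.rclikeToReal 𝕜 E
  haveI : IsScalarTower ℝ 𝕜 E := IsScalarTower.restrictScalars ℝ 𝕜 E
  locallyLipschitzOn_isBoundedBilinearMap_comp (isBoundedBilinearMap_inner (𝕜 := 𝕜)) hf hg

lemma locallyLipschitzOn_norm_sq {α E : Type*} [PseudoEMetricSpace α]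
    [SeminormedAddCommGroup E] {s : Set α} {f : α → E} (hf : LocallyLipschitzOn s f) :
    LocallyLipschitzOn s fun x => ‖f x‖ ^ 2 := by
  have hnorm : LocallyLipschitzOn s fun x => ‖f x‖ :=
    locallyLipschitzOn_comp lipschitzWith_one_norm.locallyLipschitz.locallyLipschitzOn hf
      (Set.mapsTo_univ _ _)
  simpa only [sq, smul_eq_mul] using locallyLipschitzOn_smul hnorm hnorm

theorem case2_control_law_locallyLipschitz_general {α E : Type*} [PseudoEMetricSpace α]
    [NormedAddCommGroup E] [InnerProductSpace ℝ E] {s : Set α} {F Λ : α → ℝ} {u_des G : α → E}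
    (hF : LocallyLipschitzOn s F) (hΛ : LocallyLipschitzOn s Λ)
    (hu : LocallyLipschitzOn s u_des) (hG : LocallyLipschitzOn s G)
    (hG₀ : ∀ x ∈ s, G x ≠ 0) :
    LocallyLipschitzOn s (fun x =>
      u_des x - ((F x + ⟪G x, u_des x⟫ + Λ x) / ‖G x‖ ^ 2) • G x) := by
  have hnum : LocallyLipschitzOn s fun x => F x + ⟪G x, u_des x⟫ + Λ x :=
    (hF.add (locallyLipschitzOn_inner hG hu)).add hΛ
  have hden : ∀ x ∈ s, ‖G x‖ ^ 2 ≠ 0 := fun x hx =>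
    pow_ne_zero 2 (norm_ne_zero_iff.mpr (hG₀ x hx))
  have hcoeff : LocallyLipschitzOn s fun x =>
      (F x + ⟪G x, u_des x⟫ + Λ x) / ‖G x‖ ^ 2 :=
    locallyLipschitzOn_div₀ hnum (locallyLipschitzOn_norm_sq hG) hden
  exact hu.sub (locallyLipschitzOn_smul hcoeff hG)

/-- Lipschitz continuity of the explicit Case-2 safe control law (10a): if `F, Λ, u_des, G`
are locally Lipschitz on an open set `C ⊆ ℝⁿ` and `G(x) ≠ 0` on `C`, then
`x ↦ u_des(x) − ((F(x) + ⟪G(x), u_des(x)⟫ + Λ(x))/‖G(x)‖²) • G(x)` is locally Lipschitz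
on `C`. -/
theorem case2_control_law_locallyLipschitz (n m : ℕ)
    (C : Set (EuclideanSpace ℝ (Fin n))) (hC : IsOpen C)
    (F Λ : EuclideanSpace ℝ (Fin n) → ℝ)
    (u_des G : EuclideanSpace ℝ (Fin n) → EuclideanSpace ℝ (Fin m))
    (hF : LocallyLipschitzOn C F) (hΛ : LocallyLipschitzOn C Λ)
    (hu : LocallyLipschitzOn C u_des) (hG : LocallyLipschitzOn C G)
    (hGne : ∀ x ∈ C, G x ≠ 0) :
    LocallyLipschitzOn C (fun x =>
      u_des x - ((F x + ⟪G x, u_des x⟫ + Λ x) / ‖G x‖ ^ 2) • G x) :=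
  case2_control_law_locallyLipschitz_general hF hΛ hu hG hGne
end

section
/- Suppose p_s > 0 and p_s·‖G‖² + Λ² ≠ 0. Define λ = p_s·(F + ⟪G, u_des⟫ + Λ)/(p_s·‖G‖² + Λ²), s* = 1 − (Λ/p_s)·λ, and u* = u_des − λ • G. Then these quantities satisfy the Case-2 KKT equality system of the adaptive CBF-QP: p_s·s* − p_s + Λ·λ = 0, λ • G + u* − u_des = 0, and F + ⟪G, u*⟫ + s*·Λ = 0. (Explicit closed-form solution (16) of Case 2 of the adaptive CBF-QP, where the control Barrier function constraint is active and all control-limit constraints are inactive.) -/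
open RealInnerProductSpace

/-!
The two stationarity equations determine the relaxation `s` and the control `u` as affine functions
of the multiplier `λ`. Along these, `p_s` times the left-hand side of the active constraint is
affine in `λ` with slope `-(p_s‖G‖² + Λ²)`, so its only zero is the stated `λ`.
-/

theorem relaxation_stationarity_iff {K : Type*} [Field K] {p Λ lam s : K} (hp : p ≠ 0) :
    p * s - p + Λ * lam = 0 ↔ s = 1 - (Λ / p) * lam := by
  have factored : p * s - p + Λ * lam = p * (s - (1 - (Λ / p) * lam)) := by
    field_simp
    ring
  rw [factored, mul_eq_zero_iff_left hp, sub_eq_zero]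

theorem control_stationarity_iff {R M : Type*} [Ring R] [AddCommGroup M] [Module R M]
    {lam : R} {G u u_des : M} :
    lam • G + u - u_des = 0 ↔ u = u_des - lam • G := by
  rw [sub_eq_zero, eq_sub_iff_add_eq']

section ActiveConstraint

variable {E : Type*} [SeminormedAddCommGroup E] [InnerProductSpace ℝ E]

theorem real_inner_sub_smul_self_right (x y : E) (c : ℝ) :
    ⟪x, y - c • x⟫ = ⟪x, y⟫ - c * ‖x‖ ^ 2 := by
  rw [inner_sub_right, real_inner_smul_right, real_inner_self_eq_norm_sq]

variable {F Λ p lam : ℝ} {G u_des : E}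

theorem mul_constraint_at_stationary (hp : p ≠ 0) :
    p * (F + ⟪G, u_des - lam • G⟫ + (1 - (Λ / p) * lam) * Λ) =
      p * (F + ⟪G, u_des⟫ + Λ) - lam * (p * ‖G‖ ^ 2 + Λ ^ 2) := by
  rw [real_inner_sub_smul_self_right]
  field_simp
  ring

theorem constraint_at_stationary_eq_zero_iff (hp : p ≠ 0) (hden : p * ‖G‖ ^ 2 + Λ ^ 2 ≠ 0) :
    F + ⟪G, u_des - lam • G⟫ + (1 - (Λ / p) * lam) * Λ = 0 ↔
      lam = p * (F + ⟪G, u_des⟫ + Λ) / (p * ‖G‖ ^ 2 + Λ ^ 2) := by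
  rw [← mul_eq_zero_iff_left hp, mul_constraint_at_stationary hp, sub_eq_zero, eq_div_iff hden,
    eq_comm]

theorem adaptive_cbf_qp_case2_formula_general {s : ℝ} {u : E}
    (hp : p ≠ 0) (hden : p * ‖G‖ ^ 2 + Λ ^ 2 ≠ 0) :
    (p * s - p + Λ * lam = 0 ∧ lam • G + u - u_des = 0 ∧ F + ⟪G, u⟫ + s * Λ = 0) ↔
      s = 1 - (Λ / p) * lam ∧ u = u_des - lam • G ∧
        lam = p * (F + ⟪G, u_des⟫ + Λ) / (p * ‖G‖ ^ 2 + Λ ^ 2) := by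
  rw [relaxation_stationarity_iff hp, control_stationarity_iff]
  refine and_congr_right fun hs => and_congr_right fun hu => ?_
  rw [hs, hu]
  exact constraint_at_stationary_eq_zero_iff hp hden

end ActiveConstraint

/-- Explicit closed-form solution (16) of Case 2 of the adaptive CBF-QP: with
`λ = p_s(F + ⟪G, u_des⟫ + Λ)/(p_s‖G‖² + Λ²)`, `s* = 1 − (Λ/p_s)λ` and `u* = u_des − λ•G`,
the Case-2 KKT equality system holds. -/
theorem adaptive_cbf_qp_case2_formula (m : ℕ) (F Λ : ℝ)
    (G u_des : EuclideanSpace ℝ (Fin m))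
    (p_s : ℝ) (hp : 0 < p_s) (hden : p_s * ‖G‖ ^ 2 + Λ ^ 2 ≠ 0)
    (lam : ℝ) (hlam : lam = p_s * (F + ⟪G, u_des⟫ + Λ) / (p_s * ‖G‖ ^ 2 + Λ ^ 2))
    (sStar : ℝ) (hs : sStar = 1 - (Λ / p_s) * lam)
    (uStar : EuclideanSpace ℝ (Fin m)) (hu : uStar = u_des - lam • G) :
    p_s * sStar - p_s + Λ * lam = 0 ∧
      lam • G + uStar - u_des = 0 ∧
      F + ⟪G, uStar⟫ + sStar * Λ = 0 :=
  (adaptive_cbf_qp_case2_formula_general hp.ne' hden).mpr ⟨hs, hu, hlam⟩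
end

section
/- Suppose p_s > 0 and p_s·‖G‖² + Λ² ≠ 0, and define λ = p_s·(F + ⟪G, u_des⟫ + Λ)/(p_s·‖G‖² + Λ²), s* = 1 − (Λ/p_s)·λ, u* = u_des − λ • G. If λ ≥ 0 and A·u* + b ≤ 0 componentwise, then (s*, u*) ∈ K_a and (s*, u*) is the unique minimizer of J_a on K_a. (Global optimality of the explicit Case-2 solution of the adaptive CBF-QP on its critical region.) -/
open RealInnerProductSpace Matrix

/-!
Minimizing the Lagrangian `J + λ h` over all `q = (s, u)`, without constraints, gives the point
`q* = (s*, u*)`. Completing the square there turns `J q + λ h q` into `J q* + λ h q*` plus the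
weighted squared distance from `q*` to `q`, and the formula for `λ` is the equation `h q* = 0`.
Since `λ ≥ 0`, every `q` with `h q ≤ 0` therefore costs at least `J q*` plus that squared distance,
whatever further constraints `q` satisfies.
-/

section CBFQP

variable {E : Type*} [NormedAddCommGroup E]

/-- Half the squared distance from `r` to `q`, with weight `p` on the scalar coordinate. The
objective `J_a` is the case `r = (1, u_des)`, `p = p_s`. -/
noncomputable def weightedCost (p : ℝ) (r q : ℝ × E) : ℝ :=
  p / 2 * (q.1 - r.1) ^ 2 + 1 / 2 * ‖q.2 - r.2‖ ^ 2

theorem weightedCost_nonneg {p : ℝ} (hp : 0 ≤ p) (r q : ℝ × E) : 0 ≤ weightedCost p r q := by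
  unfold weightedCost
  positivity

theorem weightedCost_eq_zero_iff {p : ℝ} (hp : 0 < p) {r q : ℝ × E} :
    weightedCost p r q = 0 ↔ q = r := by
  unfold weightedCost
  rw [add_eq_zero_iff_of_nonneg (by positivity) (by positivity), Prod.ext_iff]
  simp [hp.ne', sub_eq_zero]

variable [InnerProductSpace ℝ E]

/-- The left-hand side `h` of the adaptive CBF constraint `h (s, u) ≤ 0`. -/
def cbfConstraint (F Λ : ℝ) (G : E) (q : ℝ × E) : ℝ :=
  F + ⟪G, q.2⟫ + q.1 * Λ

/-- The stationary point of the Lagrangian `weightedCost p r + lam * cbfConstraint F Λ G`. It does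
not depend on `F`, and it is meaningful only for `p ≠ 0`. -/
noncomputable def kktPoint (p Λ : ℝ) (G : E) (r : ℝ × E) (lam : ℝ) : ℝ × E :=
  (r.1 - Λ / p * lam, r.2 - lam • G)

/-- The multiplier `λ` for which the stationary point `kktPoint p Λ G r λ` makes the CBF constraint
active; meaningful only when the denominator is nonzero. -/
noncomputable def cbfMultiplier (p F Λ : ℝ) (G : E) (r : ℝ × E) : ℝ :=
  p * cbfConstraint F Λ G r / (p * ‖G‖ ^ 2 + Λ ^ 2)

theorem cbfConstraint_kktPoint (p F Λ : ℝ) (G : E) (r : ℝ × E) (lam : ℝ) :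
    cbfConstraint F Λ G (kktPoint p Λ G r lam) =
      cbfConstraint F Λ G r - lam * (‖G‖ ^ 2 + Λ ^ 2 / p) := by
  simp only [cbfConstraint, kktPoint, inner_sub_right, real_inner_smul_right,
    real_inner_self_eq_norm_sq]
  ring

theorem cbfConstraint_kktPoint_cbfMultiplier {p F Λ : ℝ} {G : E} {r : ℝ × E} (hp : p ≠ 0)
    (hden : p * ‖G‖ ^ 2 + Λ ^ 2 ≠ 0) :
    cbfConstraint F Λ G (kktPoint p Λ G r (cbfMultiplier p F Λ G r)) = 0 := by
  rw [cbfConstraint_kktPoint, cbfMultiplier]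
  field_simp
  ring

theorem weightedCost_add_mul_cbfConstraint {p : ℝ} (hp : p ≠ 0) (F Λ : ℝ) (G : E) (r : ℝ × E)
    (lam : ℝ) (q : ℝ × E) :
    weightedCost p r q + lam * cbfConstraint F Λ G q =
      weightedCost p r (kktPoint p Λ G r lam) +
        lam * cbfConstraint F Λ G (kktPoint p Λ G r lam) +
        weightedCost p (kktPoint p Λ G r lam) q := by
  have norm_split : ‖q.2 - (r.2 - lam • G)‖ ^ 2 =
      ‖q.2 - r.2‖ ^ 2 + 2 * lam * (⟪G, q.2⟫ - ⟪G, r.2⟫) + lam ^ 2 * ‖G‖ ^ 2 := by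
    rw [sub_sub_eq_add_sub, add_sub_right_comm, norm_add_sq_real, real_inner_smul_right,
      real_inner_comm, inner_sub_right, norm_smul, mul_pow, Real.norm_eq_abs, sq_abs]
    ring
  have norm_shift : ‖r.2 - lam • G - r.2‖ ^ 2 = lam ^ 2 * ‖G‖ ^ 2 := by
    rw [sub_sub_cancel_left, norm_neg, norm_smul, mul_pow, Real.norm_eq_abs, sq_abs]
  rw [cbfConstraint_kktPoint]
  simp only [weightedCost, cbfConstraint, kktPoint, norm_split, norm_shift]
  field_simp
  ring

theorem weightedCost_kktPoint_add_le {p F Λ lam : ℝ} {G : E} {r q : ℝ × E} (hp : p ≠ 0)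
    (hlam : 0 ≤ lam) (slackness : lam * cbfConstraint F Λ G (kktPoint p Λ G r lam) = 0)
    (hq : cbfConstraint F Λ G q ≤ 0) :
    weightedCost p r (kktPoint p Λ G r lam) + weightedCost p (kktPoint p Λ G r lam) q ≤
      weightedCost p r q := by
  have penalty_nonpos : lam * cbfConstraint F Λ G q ≤ 0 :=
    mul_nonpos_of_nonneg_of_nonpos hlam hq
  linarith [weightedCost_add_mul_cbfConstraint hp F Λ G r lam q]

theorem adaptive_cbf_qp_case2_optimal_general {p F Λ lam : ℝ} {G : E} {r qStar : ℝ × E}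
    (hp : 0 < p) (hden : p * ‖G‖ ^ 2 + Λ ^ 2 ≠ 0) (hlam : lam = cbfMultiplier p F Λ G r)
    (hqStar : qStar = kktPoint p Λ G r lam) (hlamnn : 0 ≤ lam)
    {C : Set (ℝ × E)} (hC : qStar ∈ C) :
    qStar ∈ {q | cbfConstraint F Λ G q ≤ 0} ∩ C ∧
      (∀ q ∈ {q | cbfConstraint F Λ G q ≤ 0} ∩ C, weightedCost p r qStar ≤ weightedCost p r q) ∧
      (∀ q ∈ {q | cbfConstraint F Λ G q ≤ 0} ∩ C,
        weightedCost p r q = weightedCost p r qStar → q = qStar) := by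
  have active : cbfConstraint F Λ G qStar = 0 := by
    rw [hqStar, hlam, cbfConstraint_kktPoint_cbfMultiplier hp.ne' hden]
  have growth : ∀ q, cbfConstraint F Λ G q ≤ 0 →
      weightedCost p r qStar + weightedCost p qStar q ≤ weightedCost p r q := by
    intro q hq
    subst hqStar
    exact weightedCost_kktPoint_add_le hp.ne' hlamnn (mul_eq_zero_of_right lam active) hq
  refine ⟨⟨active.le, hC⟩, fun q hq => ?_, fun q hq heq => ?_⟩
  · linarith [growth q hq.1, weightedCost_nonneg hp.le qStar q]
  · rw [← weightedCost_eq_zero_iff hp]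
    linarith [growth q hq.1, weightedCost_nonneg hp.le qStar q]

end CBFQP

/-- Global optimality of the explicit Case-2 solution of the adaptive CBF-QP on its critical
region: if `λ ≥ 0` and the control limits are inactive at `u*`, then `(s*, u*)` is the unique
minimizer of `J_a` on `K_a`. -/
theorem adaptive_cbf_qp_case2_optimal (m p : ℕ) (F Λ : ℝ)
    (G u_des : EuclideanSpace ℝ (Fin m))
    (A : Matrix (Fin p) (Fin m) ℝ) (b : Fin p → ℝ)
    (p_s : ℝ) (hp : 0 < p_s) (hden : p_s * ‖G‖ ^ 2 + Λ ^ 2 ≠ 0)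
    (lam : ℝ) (hlam : lam = p_s * (F + ⟪G, u_des⟫ + Λ) / (p_s * ‖G‖ ^ 2 + Λ ^ 2))
    (sStar : ℝ) (hs : sStar = 1 - (Λ / p_s) * lam)
    (uStar : EuclideanSpace ℝ (Fin m)) (hu : uStar = u_des - lam • G)
    (hlamnn : 0 ≤ lam) (hlim : ∀ i, A.mulVec uStar i + b i ≤ 0)
    (Ka : Set (ℝ × EuclideanSpace ℝ (Fin m)))
    (hKa : Ka = {q | F + ⟪G, q.2⟫ + q.1 * Λ ≤ 0 ∧ ∀ i, A.mulVec q.2 i + b i ≤ 0})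
    (Ja : ℝ × EuclideanSpace ℝ (Fin m) → ℝ)
    (hJa : ∀ q, Ja q = (p_s / 2) * (q.1 - 1) ^ 2 + (1 / 2) * ‖q.2 - u_des‖ ^ 2) :
    (sStar, uStar) ∈ Ka ∧ (∀ q ∈ Ka, Ja (sStar, uStar) ≤ Ja q) ∧
      (∀ q ∈ Ka, Ja q = Ja (sStar, uStar) → q = (sStar, uStar)) := by
  obtain rfl : Ja = weightedCost p_s (1, u_des) := funext hJa
  subst hKa
  exact adaptive_cbf_qp_case2_optimal_general (C := {q | ∀ i, A.mulVec q.2 i + b i ≤ 0}) hp hden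
    (by simpa only [cbfMultiplier, cbfConstraint, one_mul] using hlam)
    (Prod.ext hs hu) hlamnn hlim
end

section
/- Suppose p_s > 0, A_I is a real k×m matrix with linearly independent rows, b_I ∈ ℝ^k, Ã⁻ = I_m − A_Iᵀ·(A_I·A_Iᵀ)⁻¹·A_I, and D := p_s·⟪G, Ã⁻·G⟫ + Λ² ≠ 0. Define λ = (p_s/D)·(F + ⟪G, Ã⁻·u_des⟫ + Λ − ⟪G, A_Iᵀ·(A_I·A_Iᵀ)⁻¹·b_I⟫), μ = (A_I·A_Iᵀ)⁻¹·(A_I·u_des − λ·A_I·G + b_I), u* = u_des − A_Iᵀ·μ − λ • G, and s* = 1 − (Λ/p_s)·λ. Then these quantities satisfy the Case-3 KKT equality system of the adaptive CBF-QP: p_s·s* − p_s + Λ·λ = 0, A_Iᵀ·μ + λ • G + u* − u_des = 0, F + ⟪G, u*⟫ + s*·Λ = 0, and A_I·u* + b_I = 0. (Explicit closed-form solution (20) of Case 3 of the adaptive CBF-QP, where both the control Barrier function constraint and the control-limit constraints indexed by I are active.) -/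
open RealInnerProductSpace Matrix

/-!
Stationarity in `u` together with the active control limits says that `u*` is the orthogonal
projection of `u_des - λ • G` onto the affine subspace `{v | A_I v + b_I = 0}`. This projection is
affine with linear part `Ã⁻`, so once stationarity in `s` has expressed `s*` through `λ`, the active
barrier constraint is a single linear equation in `λ`, with leading coefficient `-D / p_s`.
-/

section AffineProjection

variable {R m n : Type*} [CommRing R] [Fintype m] [DecidableEq m] [Fintype n]

/-- The right inverse `A⁺ = Aᵀ (A Aᵀ)⁻¹` of a matrix `A` with `A Aᵀ` invertible (junk otherwise, as
then `⁻¹` is `0`). Over `ℝ` it is the Moore–Penrose inverse of a matrix of full row rank. -/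
noncomputable def rightPinv (A : Matrix m n R) : Matrix n m R := Aᵀ * (A * Aᵀ)⁻¹

/-- The projection `w - A⁺ (A w + b)` of `w` onto the affine subspace `{v | A v + b = 0}`, along the
row space of `A`. Over `ℝ` this is the point of that subspace nearest to `w`. -/
noncomputable def affineProj (A : Matrix m n R) (b : m → R) (w : n → R) : n → R :=
  w - rightPinv A *ᵥ (A *ᵥ w + b)

/-- The matrix `Ã⁻` of the projection onto the kernel of `A` along its row space; it is the linear
part of `affineProj A b`. -/
noncomputable def kerProj [DecidableEq n] (A : Matrix m n R) : Matrix n n R :=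
  1 - rightPinv A * A

theorem mul_rightPinv {A : Matrix m n R} (hA : IsUnit (A * Aᵀ).det) : A * rightPinv A = 1 := by
  rw [rightPinv, ← Matrix.mul_assoc, mul_nonsing_inv _ hA]

theorem mulVec_affineProj_add {A : Matrix m n R} (hA : IsUnit (A * Aᵀ).det) (b : m → R)
    (w : n → R) : A *ᵥ affineProj A b w + b = 0 := by
  rw [affineProj, mulVec_sub, mulVec_mulVec, mul_rightPinv hA, one_mulVec]
  abel

theorem affineProj_eq_kerProj_mulVec_sub [DecidableEq n] (A : Matrix m n R) (b : m → R)
    (w : n → R) : affineProj A b w = kerProj A *ᵥ w - rightPinv A *ᵥ b := by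
  rw [affineProj, kerProj, sub_mulVec, one_mulVec, mulVec_add, mulVec_mulVec, sub_sub]

theorem dotProduct_affineProj_sub_smul [DecidableEq n] (A : Matrix m n R) (b : m → R)
    (G w : n → R) (c : R) :
    G ⬝ᵥ affineProj A b (w - c • G) =
      G ⬝ᵥ kerProj A *ᵥ w - c * (G ⬝ᵥ kerProj A *ᵥ G) - G ⬝ᵥ rightPinv A *ᵥ b := by
  rw [affineProj_eq_kerProj_mulVec_sub, mulVec_sub, mulVec_smul, dotProduct_sub, dotProduct_sub,
    dotProduct_smul, smul_eq_mul]

end AffineProjection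

theorem isUnit_det_mul_transpose_of_linearIndependent_row {K m n : Type*} [Field K] [LinearOrder K]
    [IsStrictOrderedRing K] [Fintype m] [DecidableEq m] [Fintype n] {A : Matrix m n K}
    (hA : LinearIndependent K A.row) : IsUnit (A * Aᵀ).det := by
  have hrank : (A * Aᵀ).rank = Fintype.card m := by rw [rank_self_mul_transpose, hA.rank_matrix]
  rw [← isUnit_iff_isUnit_det, ← linearIndependent_rows_iff_isUnit,
    linearIndependent_iff_card_eq_finrank_span, ← hrank, rank_eq_finrank_span_row, Set.finrank]

section KKT

variable {K m n : Type*} [Field K]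

theorem cbf_constraint_of_multiplier_eq {F Λ p D g a c lam : K} (hp : p ≠ 0)
    (hD : D = p * g + Λ ^ 2) (hD₀ : D ≠ 0) (hlam : lam = p / D * (F + a + Λ - c)) :
    F + (a - lam * g - c) + (1 - Λ / p * lam) * Λ = 0 := by
  have hlamD : lam * (p * g + Λ ^ 2) = p * (F + a + Λ - c) := by
    rw [← hD, hlam]
    field_simp
  field_simp
  linear_combination -hlamD

theorem adaptive_cbf_qp_case3_formula_general [Fintype m] [DecidableEq m] [Fintype n]
    [DecidableEq n] {A : Matrix m n K} (hA : IsUnit (A * Aᵀ).det) {b : m → K}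
    {G u_des : n → K} {F Λ p D lam : K} (hp : p ≠ 0)
    (hD : D = p * (G ⬝ᵥ kerProj A *ᵥ G) + Λ ^ 2) (hD₀ : D ≠ 0)
    (hlam : lam = p / D * (F + G ⬝ᵥ kerProj A *ᵥ u_des + Λ - G ⬝ᵥ rightPinv A *ᵥ b))
    {μ : m → K} (hμ : μ = (A * Aᵀ)⁻¹ *ᵥ (A *ᵥ u_des - lam • A *ᵥ G + b))
    {u : n → K} (hu : u = u_des - Aᵀ *ᵥ μ - lam • G) {s : K} (hs : s = 1 - Λ / p * lam) :
    p * s - p + Λ * lam = 0 ∧ Aᵀ *ᵥ μ + lam • G + u - u_des = 0 ∧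
      F + G ⬝ᵥ u + s * Λ = 0 ∧ A *ᵥ u + b = 0 := by
  have hproj : u = affineProj A b (u_des - lam • G) := by
    rw [hu, hμ, mulVec_mulVec, sub_right_comm, affineProj, mulVec_sub, mulVec_smul, rightPinv]
  refine ⟨?_, ?_, ?_, ?_⟩
  · rw [hs]
    field_simp
    ring
  · rw [hu]
    abel
  · rw [hproj, hs, dotProduct_affineProj_sub_smul]
    exact cbf_constraint_of_multiplier_eq hp hD hD₀ hlam
  · rw [hproj]
    exact mulVec_affineProj_add hA b _

end KKT

theorem real_inner_eq_dotProduct {n : Type*} [Fintype n] (x y : EuclideanSpace ℝ n) :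
    ⟪x, y⟫ = x.ofLp ⬝ᵥ y.ofLp := by
  rw [EuclideanSpace.inner_eq_star_dotProduct, star_trivial, dotProduct_comm]

/-- Explicit closed-form solution (20) of Case 3 of the adaptive CBF-QP: with
`Ã⁻ = I − A_Iᵀ(A_I A_Iᵀ)⁻¹A_I`, `D = p_s ⟪G, Ã⁻ G⟫ + Λ² ≠ 0`,
`λ = (p_s/D)(F + ⟪G, Ã⁻ u_des⟫ + Λ − ⟪G, A_Iᵀ(A_I A_Iᵀ)⁻¹ b_I⟫)`,
`μ = (A_I A_Iᵀ)⁻¹(A_I u_des − λ A_I G + b_I)`, `u* = u_des − A_Iᵀμ − λ•G`, and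
`s* = 1 − (Λ/p_s)λ`, the Case-3 KKT equality system of the adaptive CBF-QP holds. -/
theorem adaptive_cbf_qp_case3_formula (m k : ℕ) (F Λ : ℝ)
    (G u_des : EuclideanSpace ℝ (Fin m))
    (p_s : ℝ) (hp : 0 < p_s)
    (AI : Matrix (Fin k) (Fin m) ℝ) (bI : Fin k → ℝ)
    (hAI : LinearIndependent ℝ (fun i => AI i))
    (Atil : Matrix (Fin m) (Fin m) ℝ)
    (hAtil : Atil = 1 - AIᵀ * (AI * AIᵀ)⁻¹ * AI)
    (D : ℝ) (hD : D = p_s * (G ⬝ᵥ Atil.mulVec G) + Λ ^ 2) (hDne : D ≠ 0)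
    (lam : ℝ)
    (hlam : lam = (p_s / D) *
      (F + ⟪G, (WithLp.equiv 2 (Fin m → ℝ)).symm (Atil.mulVec u_des)⟫ + Λ -
        ⟪G, (WithLp.equiv 2 (Fin m → ℝ)).symm (AIᵀ.mulVec ((AI * AIᵀ)⁻¹.mulVec bI))⟫))
    (μ : Fin k → ℝ)
    (hμ : μ = (AI * AIᵀ)⁻¹.mulVec (AI.mulVec u_des - lam • AI.mulVec G + bI))
    (uStar : EuclideanSpace ℝ (Fin m))
    (huStar : uStar = u_des - (WithLp.equiv 2 (Fin m → ℝ)).symm (AIᵀ.mulVec μ) - lam • G)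
    (sStar : ℝ) (hs : sStar = 1 - (Λ / p_s) * lam) :
    p_s * sStar - p_s + Λ * lam = 0 ∧
      (WithLp.equiv 2 (Fin m → ℝ)).symm (AIᵀ.mulVec μ) + lam • G + uStar - u_des = 0 ∧
      F + ⟪G, uStar⟫ + sStar * Λ = 0 ∧
      AI.mulVec uStar + bI = 0 := by
  obtain rfl : Atil = kerProj AI := hAtil
  rw [real_inner_eq_dotProduct, real_inner_eq_dotProduct] at hlam
  obtain ⟨hslack, hstat, hcbf, hctrl⟩ := adaptive_cbf_qp_case3_formula_general
    (isUnit_det_mul_transpose_of_linearIndependent_row hAI) hp.ne' hD hDne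
    (by simpa [rightPinv] using hlam) hμ (congrArg WithLp.ofLp huStar) hs
  exact ⟨hslack, WithLp.ofLp_injective 2 hstat, by rwa [real_inner_eq_dotProduct], hctrl⟩
end
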